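/- Let G ⊆ P_n be a stabilizer group of dimension n − k with distance d(G) ≥ 2, and let A₁(G) be the number of elements of G of weight 1. Then the average weight over the whole group G satisfies 4·Σ_{g ∈ G} wt(g) = 2^{n−k}·(3n − A₁(G)); equivalently, the average weight of the stabilizer group elements equals (3n − A₁(G))/4. -/

import Mathlib

open scoped Classical

noncomputable section

/-- Pauli strings modulo phase, indexed by a finite type. -/
abbrev PauliT (ι : Type) : Type := ι → ZMod 2 × ZMod 2

abbrev Pauli (n : ℕ) : Type := PauliT (Fin n)

variable {ι : Type} [Fintype ι]

/-- Weight of a Pauli string. -/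
def wt (v : PauliT ι) : ℕ := (Finset.univ.filter fun i => v i ≠ 0).card

/-- Support of a Pauli string. -/
def suppF (v : PauliT ι) : Finset ι := Finset.univ.filter fun i => v i ≠ 0

/-- Symplectic form encoding commutation. -/
def sympl (u v : PauliT ι) : ZMod 2 :=
  ∑ i, ((u i).1 * (v i).2 + (u i).2 * (v i).1)

/-- `G` is a stabilizer group (isotropic subspace). -/
def IsStabilizer (G : Submodule (ZMod 2) (PauliT ι)) : Prop :=
  ∀ u ∈ G, ∀ v ∈ G, sympl u v = 0

/-- Membership in the symplectic dual `G^⊥`. -/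
def inDual (G : Submodule (ZMod 2) (PauliT ι)) (v : PauliT ι) : Prop :=
  ∀ g ∈ G, sympl v g = 0

/-- Distance: minimum weight of an element of `G^⊥ \ G`, `⊤` if none exists. -/
def distG (G : Submodule (ZMod 2) (PauliT ι)) : ℕ∞ :=
  sInf ((fun v => (wt v : ℕ∞)) '' {v | inDual G v ∧ v ∉ G})

/-- `g` is an `𝔽₂`-basis (indexed family) of `G`. -/
def IsBasisFam {r : ℕ} (G : Submodule (ZMod 2) (PauliT ι)) (g : Fin r → PauliT ι) : Prop :=
  LinearIndependent (ZMod 2) g ∧ Submodule.span (ZMod 2) (Set.range g) = G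

/-- The weight of a stabilizer group: optimal maximum generator weight over bases. -/
def Wgt (G : Submodule (ZMod 2) (PauliT ι)) : ℕ∞ :=
  ⨅ (r : ℕ) (g : Fin r → PauliT ι) (_ : IsBasisFam G g),
    Finset.univ.sup fun i => (wt (g i) : ℕ∞)

/-- Optimal weight over all `[[n,k,d]]` stabilizer codes. -/
def Wopt (n k : ℕ) (d : ℕ∞) : ℕ∞ :=
  ⨅ (G : Submodule (ZMod 2) (Pauli n))
    (_ : IsStabilizer G ∧ Module.finrank (ZMod 2) ↥G = n - k ∧ distG G = d),
    Wgt G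

/-- Weight enumerator: number of elements of `G` of weight `j`. -/
def Aj (G : Submodule (ZMod 2) (PauliT ι)) (j : ℕ) : ℕ :=
  Nat.card {g : PauliT ι // g ∈ G ∧ wt g = j}

/-- A weight-optimal generating set. -/
def IsWeightOptimalBasis {r : ℕ} (G : Submodule (ZMod 2) (PauliT ι))
    (g : Fin r → PauliT ι) : Prop :=
  IsBasisFam G g ∧ Monotone (fun i => wt (g i)) ∧
    ∀ h : Fin r → PauliT ι, IsBasisFam G h → Monotone (fun i => wt (h i)) →
      ∀ i, wt (g i) ≤ wt (h i)

/-- Set of average generator weights over all bases of `G`. -/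
def WavgSet (G : Submodule (ZMod 2) (PauliT ι)) : Set ℚ :=
  {x | ∃ (r : ℕ) (g : Fin r → PauliT ι), IsBasisFam G g ∧
        x = (∑ i, (wt (g i) : ℚ)) / (r : ℚ)}

/-- Splitting of Pauli strings along a bipartition given by a predicate. -/
def splitEquiv (p : ι → Prop) :
    PauliT ι ≃ₗ[ZMod 2] PauliT {x // p x} × PauliT {x // ¬ p x} :=
  (LinearEquiv.funCongrLeft (ZMod 2) (ZMod 2 × ZMod 2) (Equiv.sumCompl p)).trans
    (LinearEquiv.sumArrowLequivProdArrow _ _ _ _)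

/-- Tensor product of subspaces along a bipartition. -/
def tensorAlong (p : ι → Prop)
    (GA : Submodule (ZMod 2) (PauliT {x // p x}))
    (GB : Submodule (ZMod 2) (PauliT {x // ¬ p x})) :
    Submodule (ZMod 2) (PauliT ι) :=
  (GA.prod GB).comap (splitEquiv p).toLinearMap

/-- Decomposability as a tensor product over a nontrivial bipartition. -/
def Decomposable (G : Submodule (ZMod 2) (PauliT ι)) : Prop :=
  ∃ p : ι → Prop, (∃ x, p x) ∧ (∃ x, ¬ p x) ∧
    ∃ (GA : Submodule (ZMod 2) (PauliT {x // p x}))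
      (GB : Submodule (ZMod 2) (PauliT {x // ¬ p x})),
      G = tensorAlong p GA GB

/-- Identification of `Pauli (n₁+n₂)` with `Pauli n₁ × Pauli n₂`. -/
def pauliSumEquiv (n₁ n₂ : ℕ) :
    Pauli (n₁ + n₂) ≃ₗ[ZMod 2] Pauli n₁ × Pauli n₂ :=
  (LinearEquiv.funCongrLeft (ZMod 2) (ZMod 2 × ZMod 2) finSumFinEquiv).trans
    (LinearEquiv.sumArrowLequivProdArrow _ _ _ _)

/-- Tensor product of stabilizer subspaces on `n₁` and `n₂` qubits. -/
def tensorFin {n₁ n₂ : ℕ} (G₁ : Submodule (ZMod 2) (Pauli n₁))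
    (G₂ : Submodule (ZMod 2) (Pauli n₂)) :
    Submodule (ZMod 2) (Pauli (n₁ + n₂)) :=
  (G₁.prod G₂).comap (pauliSumEquiv n₁ n₂).toLinearMap


/-!
Double count the pairs `(v, g)` with `v` a Pauli string of weight one, `g ∈ G` and `v`, `g`
anticommuting. On each qubit in the support of `g`, exactly two of the three nonzero Paulis
anticommute with `g`, so `g` lies in `2 * wt g` pairs. A given `v` anticommutes with exactly half
of `G` unless `v ∈ G^⊥`, and of the `3n` strings of weight one `A₁(G^⊥)` lie in `G^⊥`. Finally
`A₁(G^⊥) = A₁(G)`, because `G` and `G^⊥` have the same elements of weight less than the distance.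
-/

section

open Finset

theorem two_mul_card_filter_ne_zero {V : Type*} [AddGroup V] [Fintype V] {f : V →+ ZMod 2}
    (hf : f ≠ 0) : 2 * #{x | f x ≠ 0} = Fintype.card V := by
  have ne_zero_iff : ∀ a : ZMod 2, a ≠ 0 ↔ a = 1 := by decide
  obtain ⟨x, hx⟩ := DFunLike.ne_iff.mp hf
  have card_fibers : #{y | f y = 0} = #{y | f y = 1} :=
    AddMonoidHom.card_fiber_eq_of_mem_range f ⟨0, map_zero f⟩ ⟨x, (ne_zero_iff _).mp hx⟩
  have card_add := card_filter_add_card_filter_not (s := univ) fun y => f y = 0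
  simp only [ne_zero_iff, card_univ] at card_add ⊢
  lia

section HammingNorm

variable {κ α : Type*} [Fintype κ] [DecidableEq κ] [Zero α] [DecidableEq α]

theorem hammingNorm_single (i : κ) {a : α} (ha : a ≠ 0) :
    hammingNorm (Pi.single i a : κ → α) = 1 :=
  card_eq_one.mpr ⟨i, by ext j; by_cases h : j = i <;> simp [h, ha]⟩

theorem exists_eq_single_of_hammingNorm_eq_one {v : κ → α} (hv : hammingNorm v = 1) :
    ∃ i a, a ≠ 0 ∧ Pi.single i a = v := by
  obtain ⟨i, hi⟩ := card_eq_one.mp hv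
  have ne_zero_iff (j : κ) : v j ≠ 0 ↔ j = i := by simpa using Finset.ext_iff.mp hi j
  refine ⟨i, v i, (ne_zero_iff i).mpr rfl, funext fun j => ?_⟩
  by_cases hj : j = i
  · rw [hj, Pi.single_eq_same]
  · rw [Pi.single_eq_of_ne hj, not_not.mp (mt (ne_zero_iff j).mp hj)]

theorem sum_hammingNorm_eq_one {M : Type*} [AddCommMonoid M] [Fintype α] (F : (κ → α) → M) :
    ∑ v with hammingNorm v = 1, F v = ∑ i, ∑ a with a ≠ 0, F (Pi.single i a) := by
  rw [← sum_product']
  symm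
  refine sum_bij (fun x _ => Pi.single x.1 x.2) ?_ ?_ ?_ fun _ _ => rfl
  · rintro ⟨i, a⟩ hx
    simpa using hammingNorm_single i (by simpa using hx)
  · rintro ⟨i, a⟩ hx ⟨j, b⟩ - hxy
    have ha : a ≠ 0 := by simpa using hx
    have hij : i = j := by
      by_contra hij
      exact ha (by simpa [hij] using congrFun hxy i)
    subst hij
    exact congrArg (Prod.mk i) (Pi.single_injective i hxy)
  · intro v hv
    obtain ⟨i, a, ha, rfl⟩ := exists_eq_single_of_hammingNorm_eq_one (by simpa using hv)
    exact ⟨(i, a), by simpa using ha, rfl⟩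

end HammingNorm

theorem sum_wt_eq_one {M : Type*} [AddCommMonoid M] (F : PauliT ι → M) :
    ∑ v with wt v = 1, F v = ∑ i, ∑ p with p ≠ 0, F (Pi.single i p) :=
  sum_hammingNorm_eq_one F

theorem card_wt_eq_one : #{v : PauliT ι | wt v = 1} = 3 * Fintype.card ι := by
  have card_ne_zero : #{p : ZMod 2 × ZMod 2 | p ≠ 0} = 3 := by decide
  rw [card_eq_sum_ones, sum_wt_eq_one]
  simp [card_ne_zero, mul_comm]

theorem sympl_single_left (i : ι) (p : ZMod 2 × ZMod 2) (g : PauliT ι) :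
    sympl (Pi.single i p) g = p.1 * (g i).2 + p.2 * (g i).1 := by
  rw [sympl, sum_eq_single i] <;> simp +contextual

theorem card_wt_eq_one_sympl_ne_zero (g : PauliT ι) :
    #{v | wt v = 1 ∧ sympl v g ≠ 0} = 2 * wt g := by
  have card_anticommuting : ∀ q : ZMod 2 × ZMod 2,
      (∑ p : ZMod 2 × ZMod 2 with p ≠ 0, if p.1 * q.2 + p.2 * q.1 ≠ 0 then 1 else 0) =
        if q ≠ 0 then 2 else 0 := by
    decide
  calc #{v | wt v = 1 ∧ sympl v g ≠ 0}
    _ = ∑ v with wt v = 1, if sympl v g ≠ 0 then 1 else 0 := by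
      rw [← filter_filter, card_filter]
    _ = ∑ i, if g i ≠ 0 then 2 else 0 := by
      simp_rw [sum_wt_eq_one, sympl_single_left, card_anticommuting]
    _ = 2 * wt g := by
      rw [wt, ← sum_filter, sum_const, smul_eq_mul, mul_comm]

/-- The symplectic form `ω` as a bilinear form, so that `sympl v` restricts to a linear form on a
subspace and orthogonal complements are available. -/
def symplForm : LinearMap.BilinForm (ZMod 2) (PauliT ι) :=
  LinearMap.mk₂ (ZMod 2) sympl
    (fun u v w => by simp [sympl, add_mul, sum_add_distrib, add_add_add_comm])
    (fun c u v => by simp [sympl, mul_sum, mul_add, mul_assoc])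
    (fun u v w => by simp [sympl, mul_add, sum_add_distrib, add_add_add_comm])
    (fun c u v => by simp [sympl, mul_sum, mul_add, mul_left_comm])

/-- The symplectic dual `G^⊥` as a subspace; the flip puts elements of `G` in the second argument
of the form, as in `inDual`. -/
def symplDual (G : Submodule (ZMod 2) (PauliT ι)) : Submodule (ZMod 2) (PauliT ι) :=
  G.orthogonalBilin symplForm.flip

variable {G : Submodule (ZMod 2) (PauliT ι)}

theorem mem_symplDual {v : PauliT ι} : v ∈ symplDual G ↔ inDual G v := Iff.rfl

theorem IsStabilizer.le_symplDual (hG : IsStabilizer G) : G ≤ symplDual G := hG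

theorem mem_of_mem_symplDual_of_wt_lt_distG {v : PauliT ι} (hv : v ∈ symplDual G)
    (hwt : wt v < distG G) : v ∈ G := by
  by_contra hvG
  exact hwt.not_ge (sInf_le ⟨v, ⟨hv, hvG⟩, rfl⟩)

theorem Aj_symplDual (hG : IsStabilizer G) {j : ℕ} (hj : j < distG G) :
    Aj (symplDual G) j = Aj G j := by
  refine Nat.card_congr (Equiv.subtypeEquivRight fun v => and_congr_left fun hv => ?_)
  exact ⟨fun h => mem_of_mem_symplDual_of_wt_lt_distG h (hv ▸ hj), fun h => hG.le_symplDual h⟩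

variable (G)

theorem card_wt_eq_one_notMem_symplDual_add_Aj :
    #{v : PauliT ι | wt v = 1 ∧ v ∉ symplDual G} + Aj (symplDual G) 1 =
      3 * Fintype.card ι := by
  have Aj_eq : Aj (symplDual G) 1 = #{v | wt v = 1 ∧ v ∈ symplDual G} := by
    simp [Aj, Fintype.card_subtype, and_comm]
  rw [Aj_eq, ← card_wt_eq_one, add_comm, ← filter_filter, ← filter_filter,
    card_filter_add_card_filter_not]

variable [Fintype G]

theorem two_mul_card_sympl_ne_zero (v : PauliT ι) :
    2 * #{g : G | sympl v g ≠ 0} = if v ∈ symplDual G then 0 else Fintype.card G := by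
  split_ifs with hv
  · simp [fun g : G => mem_symplDual.mp hv g g.2]
  · have restrict_ne_zero : ((symplForm v).domRestrict G).toAddMonoidHom ≠ 0 := fun h =>
      hv fun g hg => DFunLike.congr_fun h ⟨g, hg⟩
    exact two_mul_card_filter_ne_zero restrict_ne_zero

theorem four_mul_sum_wt :
    4 * ∑ g : G, wt (g : PauliT ι) =
      Fintype.card G * #{v : PauliT ι | wt v = 1 ∧ v ∉ symplDual G} := by
  have double_count : ∑ g : G, 2 * wt (g : PauliT ι) =
      ∑ v : PauliT ι with wt v = 1, #{g : G | sympl v g ≠ 0} := by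
    simp_rw [← card_wt_eq_one_sympl_ne_zero, ← filter_filter]
    exact sum_card_bipartiteAbove_eq_sum_card_bipartiteBelow _
  calc 4 * ∑ g : G, wt (g : PauliT ι)
    _ = 2 * ∑ g : G, 2 * wt (g : PauliT ι) := by rw [← mul_sum]; ring
    _ = ∑ v : PauliT ι with wt v = 1, if v ∈ symplDual G then 0 else Fintype.card G := by
      simp_rw [double_count, mul_sum, two_mul_card_sympl_ne_zero]
    _ = _ := by
      simp_rw [← ite_not (p := _ ∈ symplDual G), ← sum_filter, filter_filter,
        sum_const, smul_eq_mul, mul_comm]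

theorem whole_group_average_weight_general (G : Submodule (ZMod 2) (PauliT ι)) [Fintype G] :
    (4 * ∑ g : G, wt (g : PauliT ι) : ℤ) =
      2 ^ Module.finrank (ZMod 2) G * (3 * (Fintype.card ι : ℤ) - (Aj (symplDual G) 1 : ℤ)) := by
  have card_G : Fintype.card G = 2 ^ Module.finrank (ZMod 2) G := by
    rw [Module.card_eq_pow_finrank (K := ZMod 2), ZMod.card]
  have sum_wt := four_mul_sum_wt G
  rw [card_G] at sum_wt
  have card_add := card_wt_eq_one_notMem_symplDual_add_Aj G
  push_cast
  zify at sum_wt card_add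
  rw [sum_wt, ← card_add, add_sub_cancel_right]

end

/-- for a stabilizer group of dimension `n - k` with distance at least `2`,
`4 · Σ_{g ∈ G} wt(g) = 2^{n-k} · (3n - A₁(G))`. -/
theorem whole_group_average_weight (n k : ℕ) (G : Submodule (ZMod 2) (Pauli n))
    (hG : IsStabilizer G) (hdim : Module.finrank (ZMod 2) ↥G = n - k)
    (hd : 2 ≤ distG G) :
    (4 * ∑ g : ↥G, wt (g : Pauli n) : ℤ) =
      2 ^ (n - k) * (3 * (n : ℤ) - (Aj G 1 : ℤ)) := by
  have one_lt_distG : (1 : ℕ) < distG G := lt_of_lt_of_le (by norm_num) hd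
  rw [whole_group_average_weight_general, Aj_symplDual hG one_lt_distG, hdim, Fintype.card_fin]

end
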